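/- Let Ω ⊆ ℝ^N be open, v : Ω → [-∞, ∞) subharmonic, and suppose limsup_{x→ζ, x∈E} v(x) < v(ζ) for some set E ⊆ Ω and some ζ that is a limit point of E. Then E is thin at ζ. -/

import Mathlib

open MeasureTheory Metric Filter Topology Set

noncomputable section

variable {E : Type*} [NormedAddCommGroup E] [InnerProductSpace ℝ E]
  [MeasurableSpace E] [BorelSpace E]

/-- The mean of an extended-real-valued function over the sphere of center `x`
and radius `r`, with respect to `d`-dimensional Hausdorff measure, defined as the
infimum of the averages of the truncations `v ⊔ (-n)`. -/
def sphereMean (d : ℝ) (v : E → EReal) (x : E) (r : ℝ) : EReal :=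
  ⨅ n : ℕ, ((⨍ y in sphere x r, ((v y) ⊔ (-(n : ℝ) : EReal)).toReal ∂ μH[d] : ℝ) : EReal)

/-- `v : E → [-∞, ∞)` is subharmonic on `U` (with sphere dimension `d = N - 1`):
upper semicontinuous on `U`, `< ∞`, not identically `-∞`, and satisfying the
sub-mean value inequality on spheres of closed balls contained in `U`. -/
def IsSubharmonicOn (d : ℝ) (v : E → EReal) (U : Set E) : Prop :=
  UpperSemicontinuousOn v U ∧ (∀ x ∈ U, v x < ⊤) ∧ (∃ x ∈ U, v x ≠ ⊥) ∧
    ∀ x r, 0 < r → closedBall x r ⊆ U → v x ≤ sphereMean d v x r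

/-- `u : E → (-∞, ∞]` is superharmonic on `U` iff `-u` is subharmonic on `U`. -/
def IsSuperharmonicOn (d : ℝ) (u : E → EReal) (U : Set E) : Prop :=
  IsSubharmonicOn d (fun x => -(u x)) U

/-- A set is polar if it is contained in the `-∞`-set of a function subharmonic
on a neighborhood of it. -/
def IsPolar (d : ℝ) (S : Set E) : Prop :=
  ∃ U : Set E, IsOpen U ∧ S ⊆ U ∧
    ∃ v : E → EReal, IsSubharmonicOn d v U ∧ ∀ x ∈ S, v x = ⊥

/-- The fine topology: the coarsest topology making every globally defined
subharmonic function continuous. -/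
def fineTopology (E : Type*) [NormedAddCommGroup E] [InnerProductSpace ℝ E]
    [MeasurableSpace E] [BorelSpace E] (d : ℝ) : TopologicalSpace E :=
  ⨅ (v : E → EReal) (_ : IsSubharmonicOn d v Set.univ),
    TopologicalSpace.induced v inferInstance

/-- A set `A` is thin at `ζ` if `ζ` is not a fine limit point of `A`. -/
def ThinAt (d : ℝ) (A : Set E) (ζ : E) : Prop :=
  ζ ∉ @closure E (fineTopology E d) (A \ {ζ})

/-- A real-valued function is harmonic on `U` if it is continuous on `U` and
satisfies the mean value equality on spheres of closed balls contained in `U`. -/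
def IsHarmonicOn (d : ℝ) (h : E → ℝ) (U : Set E) : Prop :=
  ContinuousOn h U ∧ ∀ x r, 0 < r → closedBall x r ⊆ U →
    h x = ⨍ y in sphere x r, h y ∂ μH[d]

/-- An open set is Greenian if it carries a positive superharmonic function that
is not harmonic (i.e. a potential-like function exists). -/
def IsGreenian (d : ℝ) (ω : Set E) : Prop :=
  ω.Nonempty ∧ ∃ u : E → EReal, IsSuperharmonicOn d u ω ∧ (∀ x ∈ ω, 0 < u x) ∧
    ¬ ∃ h : E → ℝ, IsHarmonicOn d h ω ∧ ∀ x ∈ ω, u x = (h x : EReal)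

/-- The Perron upper class of a boundary function `f` on `ω`. -/
def upperClass (d : ℝ) (ω : Set E) (f : E → EReal) : Set (E → EReal) :=
  {u | IsSuperharmonicOn d u ω ∧ (∃ c : ℝ, ∀ x ∈ ω, (c : EReal) ≤ u x) ∧
    ∀ ζ ∈ frontier ω, f ζ ≤ Filter.liminf u (nhdsWithin ζ ω)}

/-- The upper Perron–Wiener–Brelot solution of the Dirichlet problem on `ω`
with boundary data `f`. -/
def PWB (d : ℝ) (ω : Set E) (f : E → EReal) (x : E) : EReal :=
  ⨅ u ∈ upperClass d ω f, u x

/-- A boundary point `ζ` of `ω` is regular for the Dirichlet problem if for every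
continuous boundary data the PWB solution attains the boundary value at `ζ`. -/
def IsRegularBoundaryPoint (d : ℝ) (ω : Set E) (ζ : E) : Prop :=
  ζ ∈ frontier ω ∧ ∀ f : E → ℝ, ContinuousOn f (frontier ω) →
    Filter.Tendsto (PWB d ω (fun y => (f y : EReal))) (nhdsWithin ζ ω) (nhds ((f ζ : EReal)))

/-- `A ⊆ ∂ω` is negligible for `ω` if it has harmonic measure zero, harmonic
measure being the PWB solution for the indicator boundary data. -/
def IsNegligible (d : ℝ) (ω A : Set E) : Prop :=
  ∀ x ∈ ω, PWB d ω (fun y => ((A.indicator (fun _ => (1 : ℝ)) y : ℝ) : EReal)) x = 0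

end

/-!
Fineness is tested against subharmonic functions on the whole space, so `v` is first replaced near
`ζ` by such a function `w`. With `limsup v < c < v ζ` along the set, let `w` be the maximum of `v`
and a quadratic `c - 1 + K * ‖y - ζ‖ ^ 2` on a small ball, and the quadratic alone outside it; for
large `K` the quadratic dominates near the boundary of the ball, so `w` satisfies the sub-mean value
inequality for all *small* radii. Then `{w > c}`, intersected with a small ball, is a fine
neighbourhood of `ζ` that misses the set away from `ζ`.

Passing from small to all radii uses rotations instead of the Poisson kernel: the average `W` of
the function over the rotations about `x` is still upper semicontinuous with the local sub-mean
value inequality, it agrees with the function at `x`, and on each sphere about `x` it is constantly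
the mean of the function there. The maximum principle on a ball about `x`, applied to `W`, is thus
the sub-mean value inequality on its boundary.
-/

open Module ProbabilityTheory
open scoped ENNReal

section Semicontinuity

variable {X : Type*} [TopologicalSpace X]

theorem aemeasurable_restrict_of_upperSemicontinuousOn [MeasurableSpace X] [OpensMeasurableSpace X]
    {α : Type*} [TopologicalSpace α] [LinearOrder α] [OrderTopology α] [SecondCountableTopology α]
    [MeasurableSpace α] [BorelSpace α] {μ : Measure X} {s : Set X} (hs : MeasurableSet s)
    {f : X → α} (hf : UpperSemicontinuousOn f s) : AEMeasurable f (μ.restrict s) :=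
  (aemeasurable_restrict_iff_comap_subtype hs).2
    (upperSemicontinuousOn_iff_restrict.2 hf).measurable.aemeasurable

theorem upperSemicontinuous_piecewise_bot {C : Set X} [∀ x, Decidable (x ∈ C)] (hC : IsClosed C)
    {α : Type*} [Preorder α] [OrderBot α] {f : X → α} (hf : UpperSemicontinuousOn f C) :
    UpperSemicontinuous (C.piecewise f fun _ => ⊥) := by
  intro y a ha
  by_cases hy : y ∈ C
  · rw [piecewise_eq_of_mem _ _ _ hy] at ha
    filter_upwards [eventually_nhdsWithin_iff.mp (hf y hy a ha)] with z hz
    by_cases hzC : z ∈ C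
    · simpa only [piecewise_eq_of_mem _ _ _ hzC] using hz hzC
    · simpa only [piecewise_eq_of_notMem _ _ _ hzC] using bot_le.trans_lt ha
  · filter_upwards [hC.isOpen_compl.mem_nhds hy] with z hz
    simpa only [piecewise_eq_of_notMem _ _ _ hz] using bot_le.trans_lt ha

theorem exists_ne_top_forall_le_of_isCompact {α : Type*} [LinearOrder α] [BoundedOrder α]
    [Nontrivial α] {K : Set X} (hK : IsCompact K) {f : X → α} (hf : UpperSemicontinuousOn f K)
    (hfin : ∀ x ∈ K, f x ≠ ⊤) : ∃ C ≠ ⊤, ∀ x ∈ K, f x ≤ C := by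
  rcases K.eq_empty_or_nonempty with rfl | hne
  · exact ⟨⊥, bot_ne_top, by simp⟩
  · obtain ⟨m, hmK, hm⟩ := hf.exists_isMaxOn hne hK
    exact ⟨f m, hfin m hmK, hm⟩

theorem upperSemicontinuous_lintegral [FirstCountableTopology X] {G : Type*} [MeasurableSpace G]
    {μ : Measure G} [IsFiniteMeasure μ] {f : X → G → ℝ≥0∞} (hmeas : ∀ x, Measurable (f x))
    (husc : ∀ g, UpperSemicontinuous fun x => f x g)
    (hbdd : ∀ x, ∃ C ≠ ∞, ∀ᶠ z in 𝓝 x, ∀ g, f z g ≤ C) :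
    UpperSemicontinuous fun x => ∫⁻ g, f x g ∂μ := by
  intro x a ha
  by_contra hfreq
  obtain ⟨C, hC, hfC⟩ := hbdd x
  obtain ⟨u, hux, hu⟩ := exists_seq_forall_of_frequently
    ((not_eventually.1 hfreq).and_eventually hfC)
  refine ha.not_ge ?_
  calc a ≤ limsup (fun n => ∫⁻ g, f (u n) g ∂μ) atTop :=
        le_limsup_of_frequently_le (Frequently.of_forall fun n => not_lt.1 (hu n).1)
    _ ≤ ∫⁻ g, limsup (fun n => f (u n) g) atTop ∂μ :=
        limsup_lintegral_le (fun _ => C) (fun n => hmeas (u n))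
          (fun n => Eventually.of_forall (hu n).2)
          (by simpa using ENNReal.mul_ne_top hC (measure_ne_top μ univ))
    _ ≤ ∫⁻ g, f x g ∂μ := lintegral_mono fun g =>
        (limsup_le_limsup_of_le hux).trans ((husc g).limsup_le x)

end Semicontinuity

section SphereMeasure

variable {F : Type*} [NormedAddCommGroup F] [NormedSpace ℝ F] [FiniteDimensional ℝ F]
  [MeasurableSpace F] [BorelSpace F]

theorem hausdorffMeasure_image_lt_top_of_contDiff {G : Type*} [NormedAddCommGroup G]
    [NormedSpace ℝ G] [MeasurableSpace G] [BorelSpace G] {f : F → G} (hf : ContDiff ℝ 1 f)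
    {K : Set F} (hK : IsCompact K) : μH[finrank ℝ F] (f '' K) < ∞ := by
  obtain ⟨C, hC⟩ := hf.locallyLipschitz.locallyLipschitzOn.exists_lipschitzOnWith_of_compact hK
  exact (hC.hausdorffMeasure_image_le (Nat.cast_nonneg _)).trans_lt
    (ENNReal.mul_lt_top (by simp) hK.measure_lt_top)

variable {E : Type*} [NormedAddCommGroup E] [InnerProductSpace ℝ E]

theorem mem_image_stereoInvFunAux_of_inner_nonpos {v x : E} (hv : ‖v‖ = 1) (hx : ‖x‖ = 1)
    (hvx : inner ℝ v x ≤ 0) :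
    x ∈ (fun w : (ℝ ∙ v)ᗮ => stereoInvFunAux v w) '' closedBall 0 2 := by
  have hne : x ≠ v := by
    rintro rfl
    simp [hx] at hvx
    linarith
  refine ⟨stereoToFun v x, ?_, ?_⟩
  · have hnorm : ‖(ℝ ∙ v)ᗮ.orthogonalProjectionOnto x‖ ≤ 1 :=
      hx ▸ (ℝ ∙ v)ᗮ.norm_orthogonalProjectionOnto_apply_le x
    rw [mem_closedBall_zero_iff, stereoToFun_apply, norm_smul, Real.norm_of_nonneg
      (div_nonneg zero_le_two (by rw [innerSL_apply_apply]; linarith)),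
      innerSL_apply_apply]
    calc 2 / (1 - inner ℝ v x) * ‖(ℝ ∙ v)ᗮ.orthogonalProjectionOnto x‖ ≤ 2 / 1 * 1 := by
          gcongr
          linarith
      _ = 2 := by norm_num
  · exact congrArg Subtype.val (stereo_left_inv hv (x := ⟨x, by simpa using hx⟩) hne)

theorem ball_subset_image_orthogonalProjection_sphere {v : E} (hv : ‖v‖ = 1) (x : E) {r : ℝ}
    (hr : 0 ≤ r) :
    ball ((ℝ ∙ v)ᗮ.orthogonalProjectionOnto x) r ⊆
      (ℝ ∙ v)ᗮ.orthogonalProjectionOnto '' sphere x r := by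
  intro w hw
  set u := w - (ℝ ∙ v)ᗮ.orthogonalProjectionOnto x
  have hur : ‖u‖ ^ 2 ≤ r ^ 2 := by gcongr; exact (mem_ball_iff_norm.1 hw).le
  have hperp : inner ℝ (u : E) (√(r ^ 2 - ‖u‖ ^ 2) • v) = 0 := by
    rw [inner_smul_right, Submodule.mem_orthogonal_singleton_iff_inner_left.1 u.2, mul_zero]
  refine ⟨x + (u + √(r ^ 2 - ‖u‖ ^ 2) • v), ?_, ?_⟩
  · rw [mem_sphere_iff_norm, add_sub_cancel_left, ← sq_eq_sq₀ (norm_nonneg _) hr, sq,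
      norm_add_sq_eq_norm_sq_add_norm_sq_real hperp, norm_smul, hv, mul_one, ← sq, ← sq,
      Real.norm_eq_abs, sq_abs, Real.sq_sqrt (sub_nonneg.2 hur), Submodule.coe_norm,
      add_sub_cancel]
  · rw [map_add, map_add, map_smul, Submodule.orthogonalProjectionOnto_mem_subspace_eq_self,
      Submodule.orthogonalProjectionOnto_orthogonalComplement_singleton_eq_zero, smul_zero,
      add_zero, add_sub_cancel]

variable [FiniteDimensional ℝ E]

theorem finrank_orthogonal_span_singleton_eq_sub_one {v : E} (hv : v ≠ 0) :
    (finrank ℝ (ℝ ∙ v)ᗮ : ℝ) = finrank ℝ E - 1 := by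
  rw [← (ℝ ∙ v).finrank_add_finrank_orthogonal, finrank_span_singleton hv]
  push_cast
  ring

variable [Nontrivial E] [MeasurableSpace E] [BorelSpace E]

theorem hausdorffMeasure_sphere_lt_top (x : E) {r : ℝ} (hr : 0 < r) :
    μH[(finrank ℝ E : ℝ) - 1] (sphere x r) < ∞ := by
  have hhemi : ∀ v : E, ‖v‖ = 1 →
      μH[(finrank ℝ E : ℝ) - 1] (sphere x r ∩ {y | inner ℝ v (y - x) ≤ 0}) < ∞ := by
    intro v hv
    have hchart : ContDiff ℝ 1 fun w : (ℝ ∙ v)ᗮ => x + r • stereoInvFunAux v w :=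
      contDiff_const.add ((contDiff_stereoInvFunAux.comp (ℝ ∙ v)ᗮ.subtypeL.contDiff).const_smul r)
    rw [← finrank_orthogonal_span_singleton_eq_sub_one (v := v) (by rintro rfl; simp at hv)]
    refine (measure_mono ?_).trans_lt
      (hausdorffMeasure_image_lt_top_of_contDiff hchart (isCompact_closedBall 0 2))
    rintro y ⟨hy, hvy⟩
    obtain ⟨w, hw, hwy⟩ := mem_image_stereoInvFunAux_of_inner_nonpos (x := r⁻¹ • (y - x)) hv
      (by rw [norm_smul, mem_sphere_iff_norm.1 hy, norm_inv, Real.norm_of_nonneg hr.le,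
        inv_mul_cancel₀ hr.ne'])
      (by rw [inner_smul_right]; exact mul_nonpos_of_nonneg_of_nonpos (by positivity) hvy)
    exact ⟨w, hw, by simp only [hwy, smul_inv_smul₀ hr.ne', add_sub_cancel]⟩
  obtain ⟨v, hv⟩ := exists_norm_eq E zero_le_one
  refine (measure_mono fun y hy => ?_).trans_lt
    (measure_union_lt_top (hhemi v hv) (hhemi (-v) (by rwa [norm_neg])))
  rcases le_total (inner ℝ v (y - x)) 0 with h | h
  · exact Or.inl ⟨hy, h⟩
  · exact Or.inr ⟨hy, by simpa using h⟩

theorem hausdorffMeasure_sphere_pos (x : E) {r : ℝ} (hr : 0 < r) :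
    0 < μH[(finrank ℝ E : ℝ) - 1] (sphere x r) := by
  obtain ⟨v, hv⟩ := exists_norm_eq E zero_le_one
  rw [← finrank_orthogonal_span_singleton_eq_sub_one (v := v) (by rintro rfl; simp at hv)]
  calc 0 < μH[finrank ℝ (ℝ ∙ v)ᗮ] (ball ((ℝ ∙ v)ᗮ.orthogonalProjectionOnto x) r) :=
        measure_ball_pos _ _ hr
    _ ≤ μH[finrank ℝ (ℝ ∙ v)ᗮ] ((ℝ ∙ v)ᗮ.orthogonalProjectionOnto '' sphere x r) :=
        measure_mono (ball_subset_image_orthogonalProjection_sphere hv x hr.le)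
    _ ≤ μH[finrank ℝ (ℝ ∙ v)ᗮ] (sphere x r) :=
        hausdorffMeasure_orthogonalProjectionOnto_le _ _ _ (Nat.cast_nonneg _)

end SphereMeasure

section UniformSphere

variable {E : Type*} [NormedAddCommGroup E] [InnerProductSpace ℝ E]
  [MeasurableSpace E] [BorelSpace E]

/-- The uniform probability measure on the sphere of center `x` and radius `r`: the Hausdorff
measure of dimension `finrank ℝ E - 1`, conditioned on the sphere. -/
noncomputable def uniformSphere (x : E) (r : ℝ) : Measure E :=
  ProbabilityTheory.cond μH[(finrank ℝ E : ℝ) - 1] (sphere x r)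

theorem isProbabilityMeasure_uniformSphere [FiniteDimensional ℝ E] [Nontrivial E] (x : E) {r : ℝ}
    (hr : 0 < r) : IsProbabilityMeasure (uniformSphere x r) :=
  cond_isProbabilityMeasure_of_finite (hausdorffMeasure_sphere_pos x hr).ne'
    (hausdorffMeasure_sphere_lt_top x hr).ne

theorem ae_uniformSphere_mem_sphere (x : E) (r : ℝ) : ∀ᵐ z ∂uniformSphere x r, z ∈ sphere x r :=
  ae_cond_mem isClosed_sphere.measurableSet

theorem uniformSphere_restrict_sphere (x : E) (r : ℝ) :
    (uniformSphere x r).restrict (sphere x r) = uniformSphere x r :=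
  Measure.restrict_eq_self_of_ae_mem (ae_uniformSphere_mem_sphere x r)

theorem setAverage_sphere_eq_integral_uniformSphere (f : E → ℝ) (x : E) (r : ℝ) :
    ⨍ z in sphere x r, f z ∂μH[(finrank ℝ E : ℝ) - 1] = ∫ z, f z ∂uniformSphere x r := by
  rw [setAverage_eq', uniformSphere, ProbabilityTheory.cond]

theorem measurePreserving_uniformSphere (e : E ≃ᵢ E) (x : E) (r : ℝ) :
    MeasurePreserving e (uniformSphere x r) (uniformSphere (e x) r) := by
  have hmass : μH[(finrank ℝ E : ℝ) - 1] (sphere (e x) r) =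
      μH[(finrank ℝ E : ℝ) - 1] (sphere x r) := by
    rw [← e.image_sphere, e.hausdorffMeasure_image]
  have hrestrict := (e.measurePreserving_hausdorffMeasure ((finrank ℝ E : ℝ) - 1)).restrict_preimage
    (isClosed_sphere (x := e x) (ε := r)).measurableSet
  rw [e.preimage_sphere, e.symm_apply_apply] at hrestrict
  rw [uniformSphere, uniformSphere, ProbabilityTheory.cond, ProbabilityTheory.cond, hmass]
  exact hrestrict.smul_measure _

theorem integrable_uniformSphere_of_continuous [FiniteDimensional ℝ E] [Nontrivial E] {f : E → ℝ}
    (hf : Continuous f) (x : E) {r : ℝ} (hr : 0 < r) : Integrable f (uniformSphere x r) := by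
  have := isProbabilityMeasure_uniformSphere x hr
  rw [← uniformSphere_restrict_sphere]
  exact hf.continuousOn.integrableOn_compact (isCompact_sphere x r)

theorem integral_uniformSphere_norm_sub_sq [FiniteDimensional ℝ E] [Nontrivial E] (y ζ : E)
    {r : ℝ} (hr : 0 < r) : ∫ z, ‖z - ζ‖ ^ 2 ∂uniformSphere y r = ‖y - ζ‖ ^ 2 + r ^ 2 := by
  have := isProbabilityMeasure_uniformSphere y hr
  have hint : Integrable (fun z => ‖z - ζ‖ ^ 2) (uniformSphere y r) :=
    integrable_uniformSphere_of_continuous (by fun_prop) y hr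
  have hreflect : ∫ z, ‖(2 : ℝ) • y - z - ζ‖ ^ 2 ∂uniformSphere y r =
      ∫ z, ‖z - ζ‖ ^ 2 ∂uniformSphere y r := by
    have h := measurePreserving_uniformSphere (.subLeft ((2 : ℝ) • y)) y r
    simp only [IsometryEquiv.subLeft_apply, two_smul, add_sub_cancel_right] at h ⊢
    exact h.integral_comp (IsometryEquiv.subLeft (y + y)).toHomeomorph.measurableEmbedding
      fun z => ‖z - ζ‖ ^ 2
  have hparallelogram : ∀ z ∈ sphere y r,
      ‖z - ζ‖ ^ 2 + ‖(2 : ℝ) • y - z - ζ‖ ^ 2 = 2 * (‖y - ζ‖ ^ 2 + r ^ 2) := by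
    intro z hz
    have h := parallelogram_law_with_norm ℝ (y - ζ) (z - y)
    rw [mem_sphere_iff_norm.1 hz, (by abel : y - ζ + (z - y) = z - ζ),
      (by rw [two_smul]; abel : y - ζ - (z - y) = (2 : ℝ) • y - z - ζ)] at h
    linarith
  have hsum : ∫ z, (‖z - ζ‖ ^ 2 + ‖(2 : ℝ) • y - z - ζ‖ ^ 2) ∂uniformSphere y r =
      2 * (‖y - ζ‖ ^ 2 + r ^ 2) := by
    rw [integral_congr_ae ((ae_uniformSphere_mem_sphere y r).mono hparallelogram)]
    simp
  rw [integral_add hint (integrable_uniformSphere_of_continuous (by fun_prop) y hr),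
    hreflect] at hsum
  linarith

end UniformSphere

section MaximumPrinciple

variable {E : Type*} [NormedAddCommGroup E] [InnerProductSpace ℝ E] [FiniteDimensional ℝ E]
  [Nontrivial E] [MeasurableSpace E] [BorelSpace E] {W : E → ℝ≥0∞}

theorem lt_lintegral_uniformSphere_add_norm_sub_sq {y : E} {r δ : ℝ} (hr : 0 < r) (hδ : 0 < δ)
    (hy : W y ≠ ∞) (hW : W y ≤ ∫⁻ z, W z ∂uniformSphere y r) (x : E) :
    W y + .ofReal (δ * ‖y - x‖ ^ 2) <
      ∫⁻ z, (W z + .ofReal (δ * ‖z - x‖ ^ 2)) ∂uniformSphere y r := by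
  have hq : ∫⁻ z, .ofReal (δ * ‖z - x‖ ^ 2) ∂uniformSphere y r =
      ENNReal.ofReal (δ * (‖y - x‖ ^ 2 + r ^ 2)) := by
    rw [← ofReal_integral_eq_lintegral_ofReal
      (integrable_uniformSphere_of_continuous (by fun_prop) y hr)
      (.of_forall fun z => by positivity), integral_const_mul,
      integral_uniformSphere_norm_sub_sq y x hr]
  rw [lintegral_add_right _ (by fun_prop), hq]
  refine ENNReal.add_lt_add_of_le_of_lt hy hW ((ENNReal.ofReal_lt_ofReal_iff (by positivity)).2 ?_)
  gcongr
  exact lt_add_of_pos_right _ (by positivity)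

theorem le_iSup_sphere_of_submean {x : E} {R : ℝ}
    (husc : UpperSemicontinuousOn W (closedBall x R)) (hfin : ∀ y ∈ closedBall x R, W y ≠ ∞)
    (hsub : ∀ y ∈ ball x R, ∃ r, 0 < r ∧ closedBall y r ⊆ closedBall x R ∧
      W y ≤ ∫⁻ z, W z ∂uniformSphere y r) {y : E} (hy : y ∈ closedBall x R) :
    W y ≤ ⨆ z ∈ sphere x R, W z := by
  -- Adding `δ * ‖z - x‖ ^ 2` makes the sub-mean inequality strict, so the maximum is not interior.
  suffices hδ : ∀ δ > 0, W y ≤ (⨆ z ∈ sphere x R, W z) + .ofReal (δ * R ^ 2) by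
    have hlim : Tendsto (fun δ : ℝ => (⨆ z ∈ sphere x R, W z) + .ofReal (δ * R ^ 2)) (𝓝[>] 0)
        (𝓝 ((⨆ z ∈ sphere x R, W z) + .ofReal (0 * R ^ 2))) :=
      (Continuous.tendsto (continuous_const.add
        (ENNReal.continuous_ofReal.comp (by fun_prop))) 0).mono_left nhdsWithin_le_nhds
    simpa using ge_of_tendsto hlim (eventually_mem_nhdsWithin.mono hδ)
  intro δ hδ
  set V : E → ℝ≥0∞ := fun z => W z + .ofReal (δ * ‖z - x‖ ^ 2)
  have hq : Continuous fun z : E => ENNReal.ofReal (δ * ‖z - x‖ ^ 2) :=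
    ENNReal.continuous_ofReal.comp (by fun_prop)
  obtain ⟨m, hm, hmax⟩ := (husc.add hq.continuousOn.upperSemicontinuousOn).exists_isMaxOn
    ⟨y, hy⟩ (isCompact_closedBall x R)
  have hmR : m ∈ sphere x R := by
    by_contra hne
    obtain ⟨r, hr, hball, hmr⟩ := hsub m (lt_of_le_of_ne hm hne)
    have := isProbabilityMeasure_uniformSphere m hr
    refine (lt_lintegral_uniformSphere_add_norm_sub_sq hr hδ (hfin m hm) hmr x).not_ge ?_
    calc ∫⁻ z, V z ∂uniformSphere m r ≤ ∫⁻ _, V m ∂uniformSphere m r :=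
          lintegral_mono_ae ((ae_uniformSphere_mem_sphere m r).mono fun z hz =>
            hmax (hball (sphere_subset_closedBall hz)))
      _ = V m := by simp
  calc W y ≤ V y := le_self_add
    _ ≤ V m := hmax hy
    _ ≤ (⨆ z ∈ sphere x R, W z) + .ofReal (δ * R ^ 2) := by
        simp only [V, mem_sphere_iff_norm.1 hmR]
        gcongr
        exact le_iSup₂ (f := fun z _ => W z) m hmR

end MaximumPrinciple

section Rotations

variable {E : Type*} [NormedAddCommGroup E] [InnerProductSpace ℝ E] [CompleteSpace E]

/-- The isometry `y ↦ x + g (y - x)`: the orthogonal transformation `g` moved to the center `x`. -/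
noncomputable def rotationAbout (x : E) (g : unitary (E →L[ℝ] E)) : E ≃ᵢ E :=
  ((IsometryEquiv.subRight x).trans (Unitary.linearIsometryEquiv g).toIsometryEquiv).trans
    (IsometryEquiv.addLeft x)

theorem rotationAbout_apply (x : E) (g : unitary (E →L[ℝ] E)) (y : E) :
    rotationAbout x g y = x + (g : E →L[ℝ] E) (y - x) := rfl

theorem rotationAbout_self (x : E) (g : unitary (E →L[ℝ] E)) : rotationAbout x g x = x := by
  simp [rotationAbout_apply]

theorem rotationAbout_mul (x : E) (g h : unitary (E →L[ℝ] E)) (y : E) :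
    rotationAbout x (g * h) y = rotationAbout x g (rotationAbout x h y) := by
  simp [rotationAbout_apply]

theorem dist_rotationAbout (x : E) (g : unitary (E →L[ℝ] E)) (y : E) :
    dist (rotationAbout x g y) x = dist y x := by
  simpa only [rotationAbout_self] using (rotationAbout x g).dist_eq y x

theorem exists_rotationAbout_eq {x y z : E} (h : dist y x = dist z x) :
    ∃ g, rotationAbout x g y = z := by
  rw [dist_eq_norm, dist_eq_norm] at h
  refine ⟨Unitary.linearIsometryEquiv.symm ((ℝ ∙ ((y - x) - (z - x)))ᗮ.reflection), ?_⟩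
  calc x + (ℝ ∙ ((y - x) - (z - x)))ᗮ.reflection (y - x) = x + (z - x) :=
        congrArg (x + ·) (Submodule.reflection_sub h)
    _ = z := add_sub_cancel x z

theorem continuous_rotationAbout (x : E) :
    Continuous fun p : unitary (E →L[ℝ] E) × E => rotationAbout x p.1 p.2 := by
  simp only [rotationAbout_apply]
  fun_prop

theorem compactSpace_unitary_continuousLinearMap [FiniteDimensional ℝ E] :
    CompactSpace (unitary (E →L[ℝ] E)) := by
  refine isCompact_iff_compactSpace.1 (isCompact_of_isClosed_isBounded isClosed_unitary
    ((isBounded_closedBall (x := 0) (r := 1)).subset fun g hg => ?_))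
  exact mem_closedBall_zero_iff.2 (g.opNorm_le_bound zero_le_one fun y =>
    (one_mul ‖y‖).symm ▸ ((Unitary.linearIsometryEquiv ⟨g, hg⟩).norm_map y).le)

variable (E) in
theorem exists_isMulRightInvariant_unitary [FiniteDimensional ℝ E] :
    ∃ μ : Measure (unitary (E →L[ℝ] E)), IsProbabilityMeasure μ ∧ μ.IsMulRightInvariant := by
  have := compactSpace_unitary_continuousLinearMap (E := E)
  refine ⟨(Measure.haarMeasure ⊤).inv, ⟨?_⟩, inferInstance⟩
  simpa [Measure.inv_apply] using
    Measure.haarMeasure_self (K₀ := (⊤ : TopologicalSpace.PositiveCompacts (unitary (E →L[ℝ] E))))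

/-- The average of `F` over the rotations about `x`, distributed according to `μ`. -/
noncomputable def rotationAverage (μ : Measure (unitary (E →L[ℝ] E))) (x : E) (F : E → ℝ≥0∞)
    (y : E) : ℝ≥0∞ :=
  ∫⁻ g, F (rotationAbout x g y) ∂μ

variable {μ : Measure (unitary (E →L[ℝ] E))} {F : E → ℝ≥0∞}

theorem rotationAverage_self [IsProbabilityMeasure μ] (x : E) : rotationAverage μ x F x = F x := by
  simp [rotationAverage, rotationAbout_self]

theorem rotationAverage_congr [μ.IsMulRightInvariant] {x y z : E} (h : dist y x = dist z x) :
    rotationAverage μ x F y = rotationAverage μ x F z := by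
  obtain ⟨g, rfl⟩ := exists_rotationAbout_eq h
  simp_rw [rotationAverage, ← rotationAbout_mul]
  exact (lintegral_mul_right_eq_self (fun g' => F (rotationAbout x g' y)) g).symm

theorem rotationAverage_ne_top [FiniteDimensional ℝ E] [IsFiniteMeasure μ]
    (hF : UpperSemicontinuous F) (hfin : ∀ y, F y ≠ ∞) (x y : E) : rotationAverage μ x F y ≠ ∞ := by
  obtain ⟨C, hC, hFC⟩ := exists_ne_top_forall_le_of_isCompact
    (isCompact_closedBall x (dist y x)) (hF.upperSemicontinuousOn _) fun z _ => hfin z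
  refine ne_top_of_le_ne_top ?_ (lintegral_mono fun g => hFC _ (dist_rotationAbout x g y).le)
  simpa using ENNReal.mul_ne_top hC (measure_ne_top μ univ)

variable [MeasurableSpace E] [BorelSpace E]

theorem measurable_comp_rotationAbout (hF : Measurable F) (x y : E) :
    Measurable fun g => F (rotationAbout x g y) :=
  hF.comp ((continuous_rotationAbout x).comp (.prodMk_left y)).measurable

variable [FiniteDimensional ℝ E]

theorem upperSemicontinuous_rotationAverage [IsFiniteMeasure μ] (hF : UpperSemicontinuous F)
    (hfin : ∀ y, F y ≠ ∞) (x : E) : UpperSemicontinuous (rotationAverage μ x F) := by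
  refine upperSemicontinuous_lintegral (measurable_comp_rotationAbout hF.measurable x)
    (fun g => hF.comp (rotationAbout x g).continuous) fun y => ?_
  obtain ⟨C, hC, hFC⟩ := exists_ne_top_forall_le_of_isCompact
    (isCompact_closedBall x (dist y x + 1)) (hF.upperSemicontinuousOn _) fun z _ => hfin z
  refine ⟨C, hC, ?_⟩
  filter_upwards [ball_mem_nhds y one_pos] with z hz g
  refine hFC _ ((dist_rotationAbout x g z).trans_le ?_)
  linarith [dist_triangle z y x, mem_ball.1 hz]

variable [Nontrivial E] [IsProbabilityMeasure μ]

theorem lintegral_uniformSphere_rotationAverage (hF : Measurable F) (x y : E) {r : ℝ}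
    (hr : 0 < r) : ∫⁻ z, rotationAverage μ x F z ∂uniformSphere y r =
      ∫⁻ g, ∫⁻ z, F z ∂uniformSphere (rotationAbout x g y) r ∂μ := by
  have := isProbabilityMeasure_uniformSphere y hr
  simp only [rotationAverage]
  have hmeas : Measurable fun p : E × unitary (E →L[ℝ] E) => F (rotationAbout x p.2 p.1) :=
    hF.comp ((continuous_rotationAbout x).comp continuous_swap).measurable
  rw [lintegral_lintegral_swap hmeas.aemeasurable]
  exact lintegral_congr fun g =>
    (measurePreserving_uniformSphere (rotationAbout x g) y r).lintegral_comp hF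

theorem rotationAverage_eq_lintegral_uniformSphere [μ.IsMulRightInvariant] (hF : Measurable F)
    {x y : E} (hxy : y ≠ x) :
    rotationAverage μ x F y = ∫⁻ z, F z ∂uniformSphere x (dist y x) := by
  have := isProbabilityMeasure_uniformSphere x (dist_pos.2 hxy)
  calc rotationAverage μ x F y = ∫⁻ _, rotationAverage μ x F y ∂uniformSphere x (dist y x) := by
        simp
    _ = ∫⁻ z, rotationAverage μ x F z ∂uniformSphere x (dist y x) :=
        lintegral_congr_ae ((ae_uniformSphere_mem_sphere x _).mono fun z hz =>
          rotationAverage_congr (mem_sphere.1 hz).symm)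
    _ = ∫⁻ z, F z ∂uniformSphere x (dist y x) := by
        simp [lintegral_uniformSphere_rotationAverage hF x x (dist_pos.2 hxy), rotationAbout_self]

theorem rotationAverage_le_lintegral_uniformSphere (hF : Measurable F) {r : ℝ} (hr : 0 < r)
    (hsub : ∀ y, F y ≤ ∫⁻ z, F z ∂uniformSphere y r) (x y : E) :
    rotationAverage μ x F y ≤ ∫⁻ z, rotationAverage μ x F z ∂uniformSphere y r :=
  (lintegral_mono fun g => hsub (rotationAbout x g y)).trans_eq
    (lintegral_uniformSphere_rotationAverage hF x y hr).symm

end Rotations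

section LocalToGlobal

variable {E : Type*} [NormedAddCommGroup E] [InnerProductSpace ℝ E] [FiniteDimensional ℝ E]
  [Nontrivial E] [MeasurableSpace E] [BorelSpace E]

theorem le_lintegral_uniformSphere_of_locally {F : E → ℝ≥0∞} (hF : UpperSemicontinuous F)
    (hfin : ∀ y, F y ≠ ∞) {ρ : ℝ} (hρ : 0 < ρ)
    (hloc : ∀ y r, 0 < r → r < ρ → F y ≤ ∫⁻ z, F z ∂uniformSphere y r) (x : E) {R : ℝ}
    (hR : 0 < R) : F x ≤ ∫⁻ z, F z ∂uniformSphere x R := by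
  have := FiniteDimensional.complete ℝ E
  obtain ⟨μ, hμ, hμinv⟩ := exists_isMulRightInvariant_unitary E
  calc F x = rotationAverage μ x F x := (rotationAverage_self x).symm
    _ ≤ ⨆ z ∈ sphere x R, rotationAverage μ x F z := by
        refine le_iSup_sphere_of_submean
          ((upperSemicontinuous_rotationAverage hF hfin x).upperSemicontinuousOn _)
          (fun y _ => rotationAverage_ne_top hF hfin x y) (fun y hy => ?_)
          (mem_closedBall_self hR.le)
        obtain ⟨r, hr, hrlt⟩ := exists_between (lt_min hρ (sub_pos.2 (mem_ball.1 hy)))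
        exact ⟨r, hr,
          closedBall_subset_closedBall' (by linarith [hrlt.trans_le (min_le_right _ _)]),
          rotationAverage_le_lintegral_uniformSphere hF.measurable hr
            (fun z => hloc z r hr (hrlt.trans_le (min_le_left _ _))) x y⟩
    _ ≤ ∫⁻ z, F z ∂uniformSphere x R := by
        refine iSup₂_le fun z hz => ?_
        rw [rotationAverage_eq_lintegral_uniformSphere hF.measurable
          (ne_of_mem_sphere hz hR.ne'), mem_sphere.1 hz]

end LocalToGlobal

section SphereMean

/-- The positive part of `a + c`. It turns the truncations `a ⊔ (-c)` in the definition of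
`sphereMean` into `ℝ≥0∞`-valued functions, whose means exist without integrability conditions. -/
noncomputable def posPartAdd (c : ℝ) (a : EReal) : ℝ≥0∞ :=
  (a + c).toENNReal

theorem continuous_posPartAdd (c : ℝ) : Continuous (posPartAdd c) :=
  EReal.continuous_toENNReal.comp <| continuous_iff_continuousAt.2 fun _ =>
    (EReal.continuousAt_add (.inr (EReal.coe_ne_bot c)) (.inr (EReal.coe_ne_top c))).comp
      (f := fun a => (a, (c : EReal))) (continuous_id.prodMk continuous_const).continuousAt

theorem monotone_posPartAdd (c : ℝ) : Monotone (posPartAdd c) := fun _ _ h =>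
  EReal.toENNReal_le_toENNReal (by gcongr)

theorem posPartAdd_ne_top (c : ℝ) {a : EReal} (ha : a < ⊤) : posPartAdd c a ≠ ∞ := by
  rw [posPartAdd, EReal.toENNReal_ne_top_iff]
  exact EReal.add_ne_top ha.ne (EReal.coe_ne_top c)

theorem toReal_sup_neg_eq_toReal_posPartAdd_sub (c : ℝ) {a : EReal} (ha : a < ⊤) :
    (a ⊔ (-c : EReal)).toReal = (posPartAdd c a).toReal - c := by
  induction a with
  | bot => simp [posPartAdd]
  | top => exact absurd ha (lt_irrefl _)
  | coe a =>
    rw [posPartAdd, ← EReal.coe_add, EReal.real_coe_toENNReal, ENNReal.toReal_ofReal',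
      ← EReal.coe_neg, ← EReal.coe_strictMono.monotone.map_max, EReal.toReal_coe]
    grind

theorem le_coe_toReal_sub_iff (c : ℝ) (a : EReal) {I : ℝ≥0∞} (hI : I ≠ ∞) :
    a ≤ ((I.toReal - c : ℝ) : EReal) ↔ posPartAdd c a ≤ I := by
  induction a with
  | bot => simp [posPartAdd]
  | top => simp [posPartAdd, hI, -EReal.coe_sub]
  | coe a =>
    rw [posPartAdd, ← EReal.coe_add, EReal.real_coe_toENNReal, EReal.coe_le_coe_iff,
      ENNReal.ofReal_le_iff_le_toReal hI, le_sub_iff_add_le]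

variable {E : Type*} [NormedAddCommGroup E] [InnerProductSpace ℝ E] [FiniteDimensional ℝ E]
  [Nontrivial E] [MeasurableSpace E] [BorelSpace E] {u v : E → EReal} {x : E} {r : ℝ}

theorem integral_uniformSphere_sup_neg (hv : UpperSemicontinuousOn v (sphere x r))
    (hfin : ∀ z ∈ sphere x r, v z < ⊤) (hr : 0 < r) (c : ℝ) :
    ∫⁻ z, posPartAdd c (v z) ∂uniformSphere x r ≠ ∞ ∧
      ∫ z, (v z ⊔ (-c : EReal)).toReal ∂uniformSphere x r =
        (∫⁻ z, posPartAdd c (v z) ∂uniformSphere x r).toReal - c := by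
  have := isProbabilityMeasure_uniformSphere x hr
  have hmeas : AEMeasurable (fun z => posPartAdd c (v z)) (uniformSphere x r) := by
    rw [← uniformSphere_restrict_sphere]
    exact (continuous_posPartAdd c).measurable.comp_aemeasurable
      (aemeasurable_restrict_of_upperSemicontinuousOn isClosed_sphere.measurableSet hv)
  obtain ⟨C, hC, hvC⟩ := exists_ne_top_forall_le_of_isCompact (isCompact_sphere x r)
    ((continuous_posPartAdd c).comp_upperSemicontinuousOn hv (monotone_posPartAdd c))
    fun z hz => posPartAdd_ne_top c (hfin z hz)
  have hI : ∫⁻ z, posPartAdd c (v z) ∂uniformSphere x r ≠ ∞ :=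
    ne_top_of_le_ne_top hC <| by
      simpa using lintegral_mono_ae ((ae_uniformSphere_mem_sphere x r).mono hvC)
  refine ⟨hI, ?_⟩
  rw [integral_congr_ae ((ae_uniformSphere_mem_sphere x r).mono fun z hz =>
      toReal_sup_neg_eq_toReal_posPartAdd_sub c (hfin z hz)),
    integral_sub (integrable_toReal_of_lintegral_ne_top hmeas hI) (integrable_const c),
    integral_toReal hmeas (ae_lt_top' hmeas hI), integral_const, probReal_univ, one_smul]

theorem le_sphereMean_iff (hv : UpperSemicontinuousOn v (sphere x r))
    (hfin : ∀ z ∈ sphere x r, v z < ⊤) (hr : 0 < r) {a : EReal} :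
    a ≤ sphereMean ((finrank ℝ E : ℝ) - 1) v x r ↔
      ∀ n : ℕ, posPartAdd n a ≤ ∫⁻ z, posPartAdd n (v z) ∂uniformSphere x r := by
  rw [sphereMean, le_iInf_iff]
  refine forall_congr' fun n => ?_
  obtain ⟨hI, hmean⟩ := integral_uniformSphere_sup_neg hv hfin hr n
  rw [setAverage_sphere_eq_integral_uniformSphere, hmean, le_coe_toReal_sub_iff _ _ hI]

theorem sphereMean_mono (hu : UpperSemicontinuousOn u (sphere x r))
    (hv : UpperSemicontinuousOn v (sphere x r)) (hfin : ∀ z ∈ sphere x r, v z < ⊤) (hr : 0 < r)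
    (huv : ∀ z ∈ sphere x r, u z ≤ v z) :
    sphereMean ((finrank ℝ E : ℝ) - 1) u x r ≤ sphereMean ((finrank ℝ E : ℝ) - 1) v x r :=
  (le_sphereMean_iff hv hfin hr).2 fun n =>
    ((le_sphereMean_iff hu (fun z hz => (huv z hz).trans_lt (hfin z hz)) hr).1 le_rfl n).trans <|
      lintegral_mono_ae ((ae_uniformSphere_mem_sphere x r).mono fun z hz =>
        monotone_posPartAdd n (huv z hz))

theorem coe_integral_le_sphereMean {f : E → ℝ} (hf : Continuous f) (hr : 0 < r) :
    ((∫ z, f z ∂uniformSphere x r : ℝ) : EReal) ≤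
      sphereMean ((finrank ℝ E : ℝ) - 1) (fun z => (f z : EReal)) x r := by
  refine le_iInf fun n => ?_
  simp only [← EReal.coe_neg, ← EReal.coe_strictMono.monotone.map_max, EReal.toReal_coe]
  rw [setAverage_sphere_eq_integral_uniformSphere, EReal.coe_le_coe_iff]
  exact integral_mono (integrable_uniformSphere_of_continuous hf x hr)
    (integrable_uniformSphere_of_continuous (hf.max continuous_const) x hr) fun z => le_max_left _ _

end SphereMean

section Subharmonic

variable {E : Type*} [NormedAddCommGroup E] [InnerProductSpace ℝ E] [FiniteDimensional ℝ E]
  [Nontrivial E] [MeasurableSpace E] [BorelSpace E] {u v : E → EReal} {x : E} {r : ℝ}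

theorem isSubharmonicOn_univ_of_locally (husc : UpperSemicontinuous u) (hfin : ∀ y, u y < ⊤)
    (hne : ∃ y, u y ≠ ⊥) {ρ : ℝ} (hρ : 0 < ρ)
    (hloc : ∀ y r, 0 < r → r < ρ → u y ≤ sphereMean ((finrank ℝ E : ℝ) - 1) u y r) :
    IsSubharmonicOn ((finrank ℝ E : ℝ) - 1) u univ := by
  refine ⟨husc.upperSemicontinuousOn _, fun y _ => hfin y, by simpa using hne,
    fun x R hR _ => ?_⟩
  refine (le_sphereMean_iff (husc.upperSemicontinuousOn _) (fun z _ => hfin z) hR).2 fun n => ?_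
  refine le_lintegral_uniformSphere_of_locally
    ((continuous_posPartAdd n).comp_upperSemicontinuous husc (monotone_posPartAdd n))
    (fun y => posPartAdd_ne_top n (hfin y)) hρ (fun y r hr hrρ => ?_) x hR
  exact (le_sphereMean_iff (husc.upperSemicontinuousOn _) (fun z _ => hfin z) hr).1
    (hloc y r hr hrρ) n

theorem isSubharmonicOn_univ_coe_of_continuous {f : E → ℝ} (hf : Continuous f)
    (hsub : ∀ y r, 0 < r → f y ≤ ∫ z, f z ∂uniformSphere y r) :
    IsSubharmonicOn ((finrank ℝ E : ℝ) - 1) (fun y => (f y : EReal)) univ :=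
  ⟨(continuous_coe_real_ereal.comp hf).upperSemicontinuous.upperSemicontinuousOn _,
    fun y _ => EReal.coe_lt_top (f y), ⟨0, mem_univ _, EReal.coe_ne_bot _⟩,
    fun y r hr _ => (EReal.coe_le_coe_iff.2 (hsub y r hr)).trans (coe_integral_le_sphereMean hf hr)⟩

theorem isSubharmonicOn_univ_const_add_mul_norm_sub_sq (a : ℝ) {K : ℝ} (hK : 0 ≤ K) (ζ : E) :
    IsSubharmonicOn ((finrank ℝ E : ℝ) - 1) (fun y => ((a + K * ‖y - ζ‖ ^ 2 : ℝ) : EReal))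
      univ := by
  refine isSubharmonicOn_univ_coe_of_continuous (by fun_prop) fun y r hr => ?_
  have := isProbabilityMeasure_uniformSphere y hr
  rw [integral_add (integrable_const a)
    (integrable_uniformSphere_of_continuous (by fun_prop) y hr), integral_const_mul,
    integral_uniformSphere_norm_sub_sq y ζ hr, integral_const, probReal_univ, one_smul]
  gcongr
  exact le_add_of_nonneg_right (sq_nonneg r)

end Subharmonic

section Gluing

variable {E : Type*} [NormedAddCommGroup E] [InnerProductSpace ℝ E] [FiniteDimensional ℝ E]
  [Nontrivial E] [MeasurableSpace E] [BorelSpace E] {Ω : Set E} {v q : E → EReal} {ζ : E}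

open scoped Classical in
theorem IsSubharmonicOn.piecewise_sup (hv : IsSubharmonicOn ((finrank ℝ E : ℝ) - 1) v Ω)
    (hq : IsSubharmonicOn ((finrank ℝ E : ℝ) - 1) q univ) {ρ ρ' : ℝ} (hρ : ρ' < ρ)
    (hball : closedBall ζ ρ ⊆ Ω) (hvq : ∀ y ∈ closedBall ζ ρ \ closedBall ζ ρ', v y ≤ q y) :
    IsSubharmonicOn ((finrank ℝ E : ℝ) - 1)
      (fun y => (closedBall ζ ρ).piecewise v (fun _ => ⊥) y ⊔ q y) univ := by
  set w : E → EReal := fun y => (closedBall ζ ρ).piecewise v (fun _ => ⊥) y ⊔ q y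
  have hqw : ∀ y, q y ≤ w y := fun y => le_sup_right
  have hvw : ∀ y ∈ closedBall ζ ρ, v y ≤ w y := fun y hy =>
    (piecewise_eq_of_mem _ v _ hy).ge.trans le_sup_left
  have hwq : ∀ y, y ∉ closedBall ζ ρ' → w y ≤ q y := fun y hy => by
    refine sup_le ?_ le_rfl
    by_cases hyρ : y ∈ closedBall ζ ρ
    · simpa only [piecewise_eq_of_mem _ _ _ hyρ] using hvq y ⟨hyρ, hy⟩
    · simp only [piecewise_eq_of_notMem _ _ _ hyρ, bot_le]
  have hwusc : UpperSemicontinuous w :=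
    (upperSemicontinuous_piecewise_bot isClosed_closedBall (hv.1.mono hball)).sup
      (upperSemicontinuousOn_univ_iff.1 hq.1)
  have hwfin : ∀ y, w y < ⊤ := fun y => by
    refine max_lt ?_ (hq.2.1 y (mem_univ y))
    by_cases hy : y ∈ closedBall ζ ρ
    · simpa only [piecewise_eq_of_mem _ _ _ hy] using hv.2.1 y (hball hy)
    · simp only [piecewise_eq_of_notMem _ _ _ hy, bot_lt_top]
  obtain ⟨p, -, hp⟩ := hq.2.2.1
  refine isSubharmonicOn_univ_of_locally hwusc hwfin ⟨p, ne_bot_of_le_ne_bot hp (hqw p)⟩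
    (sub_pos.2 hρ) fun y r hr hrρ => ?_
  have hq_le : q y ≤ sphereMean ((finrank ℝ E : ℝ) - 1) w y r :=
    (hq.2.2.2 y r hr (subset_univ _)).trans <|
      sphereMean_mono (hq.1.mono (subset_univ _)) (hwusc.upperSemicontinuousOn _)
        (fun z _ => hwfin z) hr fun z _ => hqw z
  by_cases hy : y ∈ closedBall ζ ρ'
  · have hsub : closedBall y r ⊆ closedBall ζ ρ :=
      closedBall_subset_closedBall' (by linarith [mem_closedBall.1 hy])
    have hsphere : sphere y r ⊆ closedBall ζ ρ := sphere_subset_closedBall.trans hsub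
    refine sup_le ?_ hq_le
    rw [piecewise_eq_of_mem _ _ _ (hsub (mem_closedBall_self hr.le))]
    exact (hv.2.2.2 y r hr (hsub.trans hball)).trans <|
      sphereMean_mono (hv.1.mono (hsphere.trans hball)) (hwusc.upperSemicontinuousOn _)
        (fun z _ => hwfin z) hr fun z hz => hvw z (hsphere hz)
  · exact (hwq y hy).trans hq_le

theorem IsSubharmonicOn.exists_univ_le_sup (hv : IsSubharmonicOn ((finrank ℝ E : ℝ) - 1) v Ω)
    (hΩ : Ω ∈ 𝓝 ζ) (c : ℝ) :
    ∃ w, IsSubharmonicOn ((finrank ℝ E : ℝ) - 1) w univ ∧ v ζ ≤ w ζ ∧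
      ∀ᶠ y in 𝓝 ζ, w y ≤ v y ⊔ c := by
  classical
  obtain ⟨ρ, hρ, hball⟩ := nhds_basis_closedBall.mem_iff.1 hΩ
  obtain ⟨C, hC, hvC⟩ := exists_ne_top_forall_le_of_isCompact (isCompact_closedBall ζ ρ)
    (hv.1.mono hball) fun y hy => (hv.2.1 y (hball hy)).ne
  obtain ⟨M, hCM, -⟩ := EReal.lt_iff_exists_real_btwn.1 hC.lt_top
  obtain ⟨K, hK, hMK⟩ : ∃ K : ℝ, 0 ≤ K ∧ M ≤ c - 1 + K * (ρ / 2) ^ 2 := by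
    refine ⟨|M - (c - 1)| / (ρ / 2) ^ 2, by positivity, ?_⟩
    rw [div_mul_cancel₀ _ (by positivity)]
    linarith [le_abs_self (M - (c - 1))]
  set q : E → ℝ := fun y => c - 1 + K * ‖y - ζ‖ ^ 2
  have hvq : ∀ y ∈ closedBall ζ ρ \ closedBall ζ (ρ / 2), v y ≤ q y := by
    rintro y ⟨hy, hy'⟩
    refine ((hvC y hy).trans hCM.le).trans (EReal.coe_le_coe_iff.2 (hMK.trans ?_))
    rw [mem_closedBall, not_le, dist_eq_norm] at hy'
    simp only [q]
    gcongr
  refine ⟨_, hv.piecewise_sup (isSubharmonicOn_univ_const_add_mul_norm_sub_sq (c - 1) hK ζ)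
    (half_lt_self hρ) hball hvq, ?_, ?_⟩
  · rw [piecewise_eq_of_mem _ _ _ (mem_closedBall_self hρ.le)]
    exact le_sup_left
  · have hqc : ∀ᶠ y in 𝓝 ζ, q y < c :=
      (show Continuous q by fun_prop).continuousAt.eventually_lt continuousAt_const (by simp [q])
    filter_upwards [hqc, closedBall_mem_nhds ζ hρ] with y hyc hy
    rw [piecewise_eq_of_mem _ _ _ hy]
    exact sup_le_sup_left (EReal.coe_le_coe_iff.2 hyc.le) _

end Gluing

section Thin

variable {E : Type*} [NormedAddCommGroup E] [InnerProductSpace ℝ E]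
  [MeasurableSpace E] [BorelSpace E]

theorem IsSubharmonicOn.isOpen_fineTopology_preimage {d : ℝ} {u : E → EReal}
    (hu : IsSubharmonicOn d u univ) {s : Set EReal} (hs : IsOpen s) :
    IsOpen[fineTopology E d] (u ⁻¹' s) :=
  (iInf₂_le u hu : fineTopology E d ≤ _) _ (isOpen_induced hs)

variable [FiniteDimensional ℝ E] [Nontrivial E] {A : Set E} {ζ : E}

theorem isOpen_fineTopology_ball (ζ : E) (η : ℝ) :
    IsOpen[fineTopology E ((finrank ℝ E : ℝ) - 1)] (ball ζ η) := by
  rcases le_or_gt η 0 with hη | hη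
  · simp [ball_eq_empty.2 hη]
  · convert (isSubharmonicOn_univ_const_add_mul_norm_sub_sq 0 zero_le_one
      ζ).isOpen_fineTopology_preimage (isOpen_Iio (a := ((η ^ 2 : ℝ) : EReal))) using 1
    ext y
    simp [-EReal.coe_pow, dist_eq_norm, sq_lt_sq₀ (norm_nonneg (y - ζ)) hη.le]

theorem thinAt_of_eventually_le {w : E → EReal}
    (hw : IsSubharmonicOn ((finrank ℝ E : ℝ) - 1) w univ) {c : EReal} (hc : c < w ζ)
    (hA : ∀ᶠ y in 𝓝[A \ {ζ}] ζ, w y ≤ c) : ThinAt ((finrank ℝ E : ℝ) - 1) A ζ := by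
  obtain ⟨η, hη, hball⟩ := Metric.mem_nhdsWithin_iff.1 hA
  intro hcl
  let _ := fineTopology E ((finrank ℝ E : ℝ) - 1)
  obtain ⟨y, ⟨hcy, hy⟩, hyA⟩ := mem_closure_iff.1 hcl _
    ((hw.isOpen_fineTopology_preimage isOpen_Ioi).inter (isOpen_fineTopology_ball ζ η))
    ⟨hc, mem_ball_self hη⟩
  have hyc : w y ≤ c := hball ⟨hy, hyA⟩
  exact hyc.not_gt hcy

theorem thin_of_limsup_lt_general {Ω : Set E} (hΩ : Ω ∈ 𝓝 ζ) {v : E → EReal}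
    (hv : IsSubharmonicOn ((finrank ℝ E : ℝ) - 1) v Ω)
    (hlt : limsup v (𝓝[A \ {ζ}] ζ) < v ζ) : ThinAt ((finrank ℝ E : ℝ) - 1) A ζ := by
  obtain ⟨c, hlc, hcv⟩ := EReal.lt_iff_exists_real_btwn.1 hlt
  obtain ⟨w, hw, hvw, hwle⟩ := hv.exists_univ_le_sup hΩ c
  refine thinAt_of_eventually_le hw (hcv.trans_le hvw) ?_
  filter_upwards [eventually_lt_of_limsup_lt hlc, hwle.filter_mono nhdsWithin_le_nhds]
    with y hyc hyw
  exact hyw.trans (sup_le hyc.le le_rfl)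

end Thin

/-- Brelot's criterion—if a subharmonic function has a limsup
along `E` at `ζ` strictly smaller than its value at `ζ`, then `E` is thin
at `ζ`. -/
theorem thin_of_limsup_lt
    (N : ℕ) (hN : 2 ≤ N) (Ω : Set (EuclideanSpace ℝ (Fin N))) (hΩopen : IsOpen Ω)
    (v : EuclideanSpace ℝ (Fin N) → EReal)
    (hv : IsSubharmonicOn ((N : ℝ) - 1) v Ω)
    (A : Set (EuclideanSpace ℝ (Fin N))) (hA : A ⊆ Ω)
    (ζ : EuclideanSpace ℝ (Fin N)) (hζΩ : ζ ∈ Ω)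
    (hlim : ζ ∈ closure (A \ {ζ}))
    (hlt : Filter.limsup v (nhdsWithin ζ (A \ {ζ})) < v ζ) :
    ThinAt ((N : ℝ) - 1) A ζ := by
  have : Nonempty (Fin N) := ⟨⟨0, by omega⟩⟩
  have hdim : (N : ℝ) = finrank ℝ (EuclideanSpace ℝ (Fin N)) := by
    rw [finrank_euclideanSpace_fin]
  rw [hdim] at hv ⊢
  exact thin_of_limsup_lt_general (hΩopen.mem_nhds hζΩ) hv hlt
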